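/- For all permutations σ ∈ S_p and τ ∈ S_q, the maps ψ preserve the over and under operations: ψ_{p+q}(σ/τ) = ψ_p(σ)/ψ_q(τ) and ψ_{p+q}(σ\τ) = ψ_p(σ)\ψ_q(τ). -/

import Mathlib

/-! Symmetric groups `Sₙ` are modelled as `Equiv.Perm (Fin n)` (with `0`-indexed letters, so
the letter `i ∈ {1, …, n}` of the paper corresponds to `i - 1 : Fin n`), with the group law
`σ · τ = σ * τ` given by composition: `(σ * τ) x = σ (τ x)`. -/

/-- `s` is a Coxeter generator `sᵢ`, i.e. the transposition of two consecutive letters. -/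
def IsAdjacentTransposition {n : ℕ} (s : Equiv.Perm (Fin n)) : Prop :=
  ∃ (i : ℕ) (h : i + 1 < n), s = Equiv.swap ⟨i, by omega⟩ ⟨i + 1, h⟩

/-- The length `l(σ)`: the least `k` such that `σ` is a product of `k` Coxeter
generators `sᵢ`. -/
noncomputable def permLength {n : ℕ} (σ : Equiv.Perm (Fin n)) : ℕ :=
  sInf {k | ∃ L : List (Equiv.Perm (Fin n)),
    L.length = k ∧ (∀ s ∈ L, IsAdjacentTransposition s) ∧ L.prod = σ}

/-- The weak Bruhat order on `Sₙ`: `ω ≤ σ` iff there is `τ` with `σ = τ · ω` and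
`l(σ) = l(τ) + l(ω)`. -/
def weakLe {n : ℕ} (ω σ : Equiv.Perm (Fin n)) : Prop :=
  ∃ τ : Equiv.Perm (Fin n), σ = τ * ω ∧ permLength σ = permLength τ + permLength ω

/-- The strict weak Bruhat order. -/
def weakLt {n : ℕ} (ω σ : Equiv.Perm (Fin n)) : Prop :=
  weakLe ω σ ∧ ω ≠ σ

/-- `σ × τ`: the image of `(σ, τ)` under the canonical embedding
`S_p × S_q ↪ S_{p+q}`, where `σ` permutes the first `p` letters and `τ` the last `q`. -/
def blockSum {p q : ℕ} (σ : Equiv.Perm (Fin p)) (τ : Equiv.Perm (Fin q)) :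
    Equiv.Perm (Fin (p + q)) :=
  finSumFinEquiv.symm.trans ((Equiv.sumCongr σ τ).trans finSumFinEquiv)

/-- `ξ` is a `(p,q)`-shuffle: `ξ(1) < … < ξ(p)` and `ξ(p+1) < … < ξ(p+q)`. -/
def IsShuffle (p q : ℕ) (ξ : Equiv.Perm (Fin (p + q))) : Prop :=
  (∀ i j : Fin (p + q), (i : ℕ) < (j : ℕ) → (j : ℕ) < p → ξ i < ξ j) ∧
  (∀ i j : Fin (p + q), p ≤ (i : ℕ) → (i : ℕ) < (j : ℕ) → ξ i < ξ j)

/-- `ξ_{p,q} ∈ S_{p+q}`: the permutation with one-line notation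
`(q+1, q+2, …, q+p, 1, 2, …, q)`. -/
def xi (p q : ℕ) : Equiv.Perm (Fin (p + q)) :=
  finSumFinEquiv.symm.trans ((Equiv.sumComm (Fin p) (Fin q)).trans
    (finSumFinEquiv.trans (finCongr (Nat.add_comm q p))))

/-- Transport of a permutation along an equality of the number of letters. -/
def permCast {m n : ℕ} (h : m = n) (π : Equiv.Perm (Fin m)) : Equiv.Perm (Fin n) :=
  (finCongr h).permCongr π

/-- The grafting `σ ∨ τ ∈ S_{p+q+1}` of `σ ∈ S_p` and `τ ∈ S_q`: in 1-indexed one-line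
notation, `(σ∨τ)(i) = σ(i)` for `1 ≤ i ≤ p`, `(σ∨τ)(p+1) = p+q+1`, and
`(σ∨τ)(i) = τ(i-p-1) + p` for `p+2 ≤ i ≤ p+q+1`.  (Equivalently,
`σ ∨ τ = (σ × τ × 1₁) · s_{p+q} · s_{p+q-1} · ⋯ · s_{p+1}`.) -/
def graft {p q : ℕ} (σ : Equiv.Perm (Fin p)) (τ : Equiv.Perm (Fin q)) :
    Equiv.Perm (Fin (p + q + 1)) :=
  blockSum (blockSum σ τ) (1 : Equiv.Perm (Fin 1)) *
    permCast (by omega) (blockSum (1 : Equiv.Perm (Fin p)) (finRotate (q + 1))⁻¹)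

/-- The `over` operation on permutations: `σ / τ := σ × τ`. -/
def overP {p q : ℕ} (σ : Equiv.Perm (Fin p)) (τ : Equiv.Perm (Fin q)) :
    Equiv.Perm (Fin (p + q)) :=
  blockSum σ τ

/-- The `under` operation on permutations: `σ \ τ := ξ_{p,q} · (σ × τ)`. -/
def underP {p q : ℕ} (σ : Equiv.Perm (Fin p)) (τ : Equiv.Perm (Fin q)) :
    Equiv.Perm (Fin (p + q)) :=
  xi p q * blockSum σ τ

/-- Planar binary trees: `leaf` is the tree `|` (no interior vertex) and
`node l r = l ∨ r` is the grafting of `l` and `r` (their roots are joined to a new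
vertex, which becomes the root). -/
inductive PBTree : Type
  | leaf : PBTree
  | node : PBTree → PBTree → PBTree
deriving DecidableEq

/-- The number of interior vertices of a planar binary tree: `t ∈ Yₙ` iff `t.size = n`. -/
def PBTree.size : PBTree → ℕ
  | .leaf => 0
  | .node l r => l.size + r.size + 1

/-- The weak order on planar binary trees, generated transitively by
(a) `u ≤ u' → v ≤ v' → u∨v ≤ u'∨v'` and (b) `(u∨v)∨w ≤ u∨(v∨w)`. -/
inductive TreeLe : PBTree → PBTree → Prop
  | refl (t : PBTree) : TreeLe t t
  | graft {u u' v v' : PBTree} : TreeLe u u' → TreeLe v v' →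
      TreeLe (.node u v) (.node u' v')
  | rotate (u v w : PBTree) : TreeLe (.node (.node u v) w) (.node u (.node v w))
  | trans {a b c : PBTree} : TreeLe a b → TreeLe b c → TreeLe a c

/-- The `over` operation on trees: `u / v` is obtained by identifying the root of `u`
with the leftmost leaf of `v`; recursively `u / | = u` and `u / (vˡ∨vʳ) = (u/vˡ) ∨ vʳ`. -/
def treeOver : PBTree → PBTree → PBTree
  | u, .leaf => u
  | u, .node vl vr => .node (treeOver u vl) vr

/-- The `under` operation on trees: `u \ v` is obtained by identifying the rightmost leaf
of `u` with the root of `v`; recursively `| \ v = v` and `(uˡ∨uʳ) \ v = uˡ ∨ (uʳ\v)`. -/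
def treeUnder : PBTree → PBTree → PBTree
  | .leaf, v => v
  | .node ul ur, v => .node ul (treeUnder ur v)

/-- The graph of the map `ψₙ : Sₙ → Yₙ`: `PsiRel σ t` holds iff `ψ(σ) = t`.
The map `ψ` sends `σ ∈ Sₙ` with `σ(i) = n` to `ψ(σˡ) ∨ ψ(σʳ)`, where
`σˡ ∈ S_{i-1}`, `σʳ ∈ S_{n-i}` are the order-preserving relabelings of the subwords of
the one-line notation of `σ` to the left and to the right of the letter `n`; equivalently
(Proposition 1.8 of the paper), `σ = (γ × 1₁) · (σˡ ∨ σʳ)` for a (unique)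
`(i-1, n-i)`-shuffle `γ`. -/
inductive PsiRel : {n : ℕ} → Equiv.Perm (Fin n) → PBTree → Prop
  | leaf (σ : Equiv.Perm (Fin 0)) : PsiRel σ .leaf
  | node {a b : ℕ} {γ : Equiv.Perm (Fin (a + b))} {σl : Equiv.Perm (Fin a)}
      {σr : Equiv.Perm (Fin b)} {tl tr : PBTree} :
      IsShuffle a b γ → PsiRel σl tl → PsiRel σr tr →
      PsiRel (blockSum γ (1 : Equiv.Perm (Fin 1)) * graft σl σr) (.node tl tr)

/-! `ψ(σ)` is the decreasing tree of the one-line word of `σ`: the greatest letter is at the root,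
and the subwords on either side of it give the two subtrees. The decreasing tree only sees the
relative order of the letters, so it makes sense for words in any linear order and no relabelling
is needed. The words of `σ / τ` and `σ \ τ` are concatenations of order-preserving relabellings of
those of `σ` and `τ`, in which all letters of one factor exceed all letters of the other. So the
greatest letter always lies in one and the same factor, and the theorem follows by induction on the
tree of that factor. -/

/-- `HasDecreasingTree w t`: the word `w` has decreasing tree `t`. The greatest letter of `w` labels
the root, and the subwords to its left and right give the subtrees. A word in which one of these
greatest letters is repeated has no decreasing tree. -/
inductive HasDecreasingTree {α : Type*} [LT α] : List α → PBTree → Prop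
  | nil : HasDecreasingTree [] .leaf
  | node {l r : List α} {m : α} {tl tr : PBTree} (lt_left : ∀ x ∈ l, x < m)
      (lt_right : ∀ x ∈ r, x < m) (left : HasDecreasingTree l tl)
      (right : HasDecreasingTree r tr) : HasDecreasingTree (l ++ m :: r) (.node tl tr)

namespace HasDecreasingTree

theorem treeOver_append {α : Type*} [LT α] {u v : List α} {t w : PBTree}
    (hu : HasDecreasingTree u t) (hv : HasDecreasingTree v w) (huv : ∀ x ∈ u, ∀ y ∈ v, x < y) :
    HasDecreasingTree (u ++ v) (treeOver t w) := by
  induction hv with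
  | nil => rwa [List.append_nil]
  | @node l r m tl tr hl hr _ right ihl _ =>
    have hul : ∀ x ∈ u ++ l, x < m := by
      rw [List.forall_mem_append]
      exact ⟨fun x hx => huv x hx m (by simp), hl⟩
    rw [← List.append_assoc]
    exact node hul hr (ihl fun x hx y hy => huv x hx y (by simp [hy])) right

theorem treeUnder_append {α : Type*} [LT α] {u v : List α} {t w : PBTree}
    (hu : HasDecreasingTree u t) (hv : HasDecreasingTree v w) (hvu : ∀ x ∈ u, ∀ y ∈ v, y < x) :
    HasDecreasingTree (u ++ v) (treeUnder t w) := by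
  induction hu with
  | nil => exact hv
  | @node l r m tl tr hl hr left _ _ ihr =>
    have hrv : ∀ x ∈ r ++ v, x < m := by
      rw [List.forall_mem_append]
      exact ⟨hr, hvu m (by simp)⟩
    rw [List.append_assoc, List.cons_append]
    exact node hl hrv left (ihr fun x hx y hy => hvu x (by simp [hx]) y hy)

theorem map {α β : Type*} [Preorder α] [Preorder β] {f : α → β} (hf : StrictMono f) {w : List α}
    {t : PBTree} (h : HasDecreasingTree w t) : HasDecreasingTree (w.map f) t := by
  induction h with
  | nil => exact nil
  | node hl hr _ _ ihl ihr =>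
    rw [List.map_append, List.map_cons]
    exact node (List.forall_mem_map.2 fun x hx => hf (hl x hx))
      (List.forall_mem_map.2 fun x hx => hf (hr x hx)) ihl ihr

theorem of_map {α β : Type*} [LinearOrder α] [Preorder β] {f : α → β} (hf : StrictMono f)
    {w : List α} {t : PBTree} (h : HasDecreasingTree (w.map f) t) : HasDecreasingTree w t := by
  generalize hw : w.map f = w' at h
  induction h generalizing w with
  | nil => rw [List.map_eq_nil_iff.1 hw]; exact nil
  | node hl hr _ _ ihl ihr =>
    obtain ⟨l, mr, rfl, rfl, hmr⟩ := List.map_eq_append_iff.1 hw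
    obtain ⟨m, r, rfl, rfl, rfl⟩ := List.map_eq_cons_iff.1 hmr
    exact node (fun x hx => hf.lt_iff_lt.1 (hl _ (List.mem_map_of_mem hx)))
      (fun x hx => hf.lt_iff_lt.1 (hr _ (List.mem_map_of_mem hx))) (ihl rfl) (ihr rfl)

end HasDecreasingTree

section OneLineNotation

variable {p q : ℕ} (σ : Equiv.Perm (Fin p)) (τ : Equiv.Perm (Fin q))

@[simp]
theorem blockSum_castAdd (i : Fin p) : blockSum σ τ (i.castAdd q) = (σ i).castAdd q := by
  simp [blockSum]

@[simp]
theorem blockSum_natAdd (j : Fin q) : blockSum σ τ (j.natAdd p) = (τ j).natAdd p := by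
  simp [blockSum]

theorem blockSum_castSucc (ρ : Equiv.Perm (Fin 1)) (i : Fin p) :
    blockSum σ ρ i.castSucc = (σ i).castSucc :=
  blockSum_castAdd σ ρ i

theorem blockSum_last (ρ : Equiv.Perm (Fin 1)) : blockSum σ ρ (Fin.last p) = Fin.last p := by
  have h := blockSum_natAdd σ ρ (Fin.last 0)
  rwa [Subsingleton.elim (ρ (Fin.last 0)) (Fin.last 0), Fin.natAdd_last] at h

theorem xi_castAdd (i : Fin p) : xi p q (i.castAdd q) = i.addNat q := by
  ext
  simp [xi, Nat.add_comm]

theorem xi_natAdd (j : Fin q) : xi p q (j.natAdd p) = j.castLE (Nat.le_add_left q p) := by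
  ext
  simp [xi]

theorem finRotate_inv_zero (n : ℕ) : (finRotate (n + 1))⁻¹ 0 = Fin.last n := by
  rw [Equiv.Perm.inv_eq_iff_eq, finRotate_last]

theorem finRotate_inv_succ {n : ℕ} (j : Fin n) : (finRotate (n + 1))⁻¹ j.succ = j.castSucc := by
  rw [Equiv.Perm.inv_eq_iff_eq, finRotate_apply, Fin.coeSucc_eq_succ]

theorem graft_apply (i : Fin (p + (q + 1))) :
    graft σ τ i = blockSum (blockSum σ τ) (1 : Equiv.Perm (Fin 1))
      (blockSum (1 : Equiv.Perm (Fin p)) (finRotate (q + 1))⁻¹ i) :=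
  rfl

theorem graft_castAdd (i : Fin p) : graft σ τ (i.castAdd (q + 1)) = ((σ i).castAdd q).castSucc := by
  rw [graft_apply, blockSum_castAdd, ← blockSum_castAdd σ τ, ← blockSum_castSucc _ 1]
  rfl

theorem graft_natAdd_zero :
    graft σ τ (Fin.natAdd p (0 : Fin (q + 1))) = Fin.last (p + q) := by
  rw [graft_apply, blockSum_natAdd, finRotate_inv_zero, Fin.natAdd_last, blockSum_last]

theorem graft_natAdd_succ (j : Fin q) :
    graft σ τ (Fin.natAdd p j.succ) = ((τ j).natAdd p).castSucc := by
  rw [graft_apply, blockSum_natAdd, finRotate_inv_succ, ← blockSum_natAdd σ τ,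
    ← blockSum_castSucc _ 1]
  rfl

theorem ofFn_eq_append {α : Type*} (f : Fin (p + q) → α) :
    List.ofFn f = List.ofFn (f ∘ Fin.castAdd q) ++ List.ofFn (f ∘ Fin.natAdd p) :=
  List.ofFn_add

theorem ofFn_overP :
    List.ofFn (overP σ τ) =
      (List.ofFn σ).map (Fin.castAdd q) ++ (List.ofFn τ).map (Fin.natAdd p) := by
  simp [overP, ofFn_eq_append, List.map_ofFn, Function.comp_def]

theorem ofFn_underP :
    List.ofFn (underP σ τ) =
      (List.ofFn σ).map (Fin.addNat · q) ++
        (List.ofFn τ).map (Fin.castLE (Nat.le_add_left q p)) := by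
  simp [underP, ofFn_eq_append, List.map_ofFn, Function.comp_def, xi_castAdd, xi_natAdd]

theorem ofFn_blockSum_mul_graft (γ : Equiv.Perm (Fin (p + q))) :
    List.ofFn (blockSum γ (1 : Equiv.Perm (Fin 1)) * graft σ τ) =
      (List.ofFn σ).map (Fin.castSucc ∘ γ ∘ Fin.castAdd q) ++
        Fin.last (p + q) :: (List.ofFn τ).map (Fin.castSucc ∘ γ ∘ Fin.natAdd p) := by
  refine (ofFn_eq_append (p := p) (q := q + 1) _).trans ?_
  simp only [List.ofFn_succ, List.map_ofFn, Function.comp_def, Equiv.Perm.mul_apply, graft_castAdd,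
    graft_natAdd_zero, graft_natAdd_succ, blockSum_castSucc, blockSum_last]

end OneLineNotation

theorem isShuffle_iff_strictMono {a b : ℕ} {γ : Equiv.Perm (Fin (a + b))} :
    IsShuffle a b γ ↔ StrictMono (γ ∘ Fin.castAdd b) ∧ StrictMono (γ ∘ Fin.natAdd a) := by
  constructor
  · rintro ⟨hl, hr⟩
    exact ⟨fun i j hij => hl _ _ hij j.2, fun i j hij => hr _ _ (by simp) (by simpa using hij)⟩
  · rintro ⟨hl, hr⟩
    refine ⟨fun i j hij hj => hl (a := ⟨i, hij.trans hj⟩) (b := ⟨j, hj⟩) hij, fun i j hi hij => ?_⟩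
    induction i using Fin.addCases with
    | left i => exact absurd hi (by simp)
    | right i =>
      induction j using Fin.addCases with
      | left j => exact absurd (hi.trans_lt hij) (by simp)
      | right j => exact hr (by simpa using hij)

theorem exists_standardization {α : Type*} [LinearOrder α] {l : List α} (hl : l.Nodup)
    {n : ℕ} (hn : l.length = n) :
    ∃ (σ : Equiv.Perm (Fin n)) (f : Fin n → α), StrictMono f ∧ (List.ofFn σ).map f = l := by
  subst hn
  have hmono : StrictMono (l.get ∘ Tuple.sort l.get) :=
    (Tuple.monotone_sort l.get).strictMono_of_injective
      (hl.injective_get.comp (Tuple.sort l.get).injective)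
  refine ⟨(Tuple.sort l.get)⁻¹, _, hmono, ?_⟩
  simp [List.map_ofFn, Function.comp_def]

theorem exists_isShuffle_comp_eq {a b : ℕ} {f : Fin a → Fin (a + b)} {g : Fin b → Fin (a + b)}
    (hf : StrictMono f) (hg : StrictMono g) (hfg : ∀ i j, f i ≠ g j) :
    ∃ γ, IsShuffle a b γ ∧ γ ∘ Fin.castAdd b = f ∧ γ ∘ Fin.natAdd a = g := by
  have hinj : Function.Injective (Fin.append f g) :=
    Fin.append_injective_iff.2 ⟨hf.injective, hg.injective, hfg⟩
  let γ : Equiv.Perm (Fin (a + b)) := Equiv.ofBijective _ (Finite.injective_iff_bijective.1 hinj)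
  have hγf : γ ∘ Fin.castAdd b = f := funext (Fin.append_left f g)
  have hγg : γ ∘ Fin.natAdd a = g := funext (Fin.append_right f g)
  exact ⟨γ, isShuffle_iff_strictMono.2 ⟨hγf ▸ hf, hγg ▸ hg⟩, hγf, hγg⟩

theorem exists_isShuffle_map_eq {a b : ℕ} {l r : List (Fin (a + b))} (hl : l.length = a)
    (hr : r.length = b) (hlr : (l ++ r).Nodup) :
    ∃ (γ : Equiv.Perm (Fin (a + b))) (σl : Equiv.Perm (Fin a)) (σr : Equiv.Perm (Fin b)),
      IsShuffle a b γ ∧ (List.ofFn σl).map (γ ∘ Fin.castAdd b) = l ∧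
        (List.ofFn σr).map (γ ∘ Fin.natAdd a) = r := by
  obtain ⟨hl_nodup, hr_nodup, hdisj⟩ := List.nodup_append.1 hlr
  obtain ⟨σl, f, hf, rfl⟩ := exists_standardization hl_nodup hl
  obtain ⟨σr, g, hg, rfl⟩ := exists_standardization hr_nodup hr
  have hfg (i : Fin a) (j : Fin b) : f i ≠ g j :=
    hdisj _ (List.mem_map_of_mem (List.mem_ofFn.2 (σl.surjective i)))
      _ (List.mem_map_of_mem (List.mem_ofFn.2 (σr.surjective j)))
  obtain ⟨γ, hγ, rfl, rfl⟩ := exists_isShuffle_comp_eq hf hg hfg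
  exact ⟨γ, σl, σr, hγ, rfl, rfl⟩

theorem eq_top_of_top_mem_append_cons {α : Type*} [PartialOrder α] [OrderTop α] {l r : List α}
    {m : α} (htop : ⊤ ∈ l ++ m :: r) (hl : ∀ x ∈ l, x < m) (hr : ∀ x ∈ r, x < m) : m = ⊤ := by
  rcases List.mem_append.1 htop with h | h
  · exact absurd (hl _ h) not_top_lt
  · rcases List.mem_cons.1 h with h | h
    · exact h.symm
    · exact absurd (hr _ h) not_top_lt

theorem exists_map_castSucc_eq {n : ℕ} {l : List (Fin (n + 1))} (hl : ∀ x ∈ l, x < Fin.last n) :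
    ∃ l' : List (Fin n), l'.map Fin.castSucc = l := by
  rw [← Set.mem_range, Set.range_list_map]
  exact fun x hx => ⟨x.castPred (hl x hx).ne, x.castSucc_castPred _⟩

theorem exists_eq_blockSum_mul_graft {a b : ℕ} {π : Equiv.Perm (Fin (a + b + 1))}
    {l r : List (Fin (a + b + 1))} {m : Fin (a + b + 1)} (hw : List.ofFn π = l ++ m :: r)
    (ha : l.length = a) (hb : r.length = b) (hl : ∀ x ∈ l, x < m) (hr : ∀ x ∈ r, x < m) :
    ∃ (γ : Equiv.Perm (Fin (a + b))) (σl : Equiv.Perm (Fin a)) (σr : Equiv.Perm (Fin b)),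
      IsShuffle a b γ ∧ π = blockSum γ (1 : Equiv.Perm (Fin 1)) * graft σl σr ∧
        (List.ofFn σl).map (Fin.castSucc ∘ γ ∘ Fin.castAdd b) = l ∧
        (List.ofFn σr).map (Fin.castSucc ∘ γ ∘ Fin.natAdd a) = r := by
  have hlast : Fin.last (a + b) ∈ l ++ m :: r := hw ▸ List.mem_ofFn.2 (π.surjective _)
  obtain rfl : m = Fin.last (a + b) := eq_top_of_top_mem_append_cons hlast hl hr
  obtain ⟨l, rfl⟩ := exists_map_castSucc_eq hl
  obtain ⟨r, rfl⟩ := exists_map_castSucc_eq hr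
  have hlr : (l ++ r).Nodup := by
    have hnodup := List.nodup_ofFn.2 π.injective
    rw [hw, List.nodup_middle, ← List.map_append, List.nodup_cons] at hnodup
    exact hnodup.2.of_map _
  rw [List.length_map] at ha hb
  obtain ⟨γ, σl, σr, hγ, rfl, rfl⟩ := exists_isShuffle_map_eq ha hb hlr
  rw [List.map_map, List.map_map] at hw ⊢
  have hπ : π = blockSum γ (1 : Equiv.Perm (Fin 1)) * graft σl σr :=
    DFunLike.coe_injective
      (List.ofFn_injective (hw.trans (ofFn_blockSum_mul_graft σl σr γ).symm))
  exact ⟨γ, σl, σr, hγ, hπ, rfl, rfl⟩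

theorem PsiRel.hasDecreasingTree {n : ℕ} {σ : Equiv.Perm (Fin n)} {t : PBTree}
    (h : PsiRel σ t) : HasDecreasingTree (List.ofFn σ) t := by
  induction h with
  | leaf => exact .nil
  | node hγ _ _ ihl ihr =>
    obtain ⟨hγl, hγr⟩ := isShuffle_iff_strictMono.1 hγ
    rw [ofFn_blockSum_mul_graft]
    exact .node (by simp [Fin.castSucc_lt_last]) (by simp [Fin.castSucc_lt_last])
      (ihl.map (Fin.strictMono_castSucc.comp hγl)) (ihr.map (Fin.strictMono_castSucc.comp hγr))

theorem HasDecreasingTree.psiRel {t : PBTree} {n : ℕ} {π : Equiv.Perm (Fin n)}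
    (h : HasDecreasingTree (List.ofFn π) t) : PsiRel π t := by
  induction t generalizing n with
  | leaf =>
    generalize hw : List.ofFn π = w at h
    cases h
    obtain rfl : n = 0 := by simpa using hw
    exact .leaf π
  | node tl tr ihl ihr =>
    generalize hw : List.ofFn π = w at h
    obtain _ | @⟨l, r, m, _, _, hl, hr, left, right⟩ := h
    obtain ⟨a, ha⟩ : ∃ a, l.length = a := ⟨_, rfl⟩
    obtain ⟨b, hb⟩ : ∃ b, r.length = b := ⟨_, rfl⟩
    obtain rfl : n = a + b + 1 := by
      simpa [ha, hb, Nat.add_assoc] using congrArg List.length hw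
    obtain ⟨γ, σl, σr, hγ, rfl, rfl, rfl⟩ := exists_eq_blockSum_mul_graft hw ha hb hl hr
    obtain ⟨hγl, hγr⟩ := isShuffle_iff_strictMono.1 hγ
    exact .node hγ (ihl (left.of_map (Fin.strictMono_castSucc.comp hγl)))
      (ihr (right.of_map (Fin.strictMono_castSucc.comp hγr)))

theorem psiRel_overP {p q : ℕ} {σ : Equiv.Perm (Fin p)} {τ : Equiv.Perm (Fin q)} {t w : PBTree}
    (ht : PsiRel σ t) (hw : PsiRel τ w) : PsiRel (overP σ τ) (treeOver t w) := by
  apply HasDecreasingTree.psiRel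
  rw [ofFn_overP]
  refine (ht.hasDecreasingTree.map (Fin.strictMono_castAdd q)).treeOver_append
    (hw.hasDecreasingTree.map (Fin.strictMono_natAdd p)) ?_
  simp only [List.forall_mem_map, List.forall_mem_ofFn_iff, Fin.lt_def, Fin.val_castAdd,
    Fin.val_natAdd]
  omega

theorem psiRel_underP {p q : ℕ} {σ : Equiv.Perm (Fin p)} {τ : Equiv.Perm (Fin q)} {t w : PBTree}
    (ht : PsiRel σ t) (hw : PsiRel τ w) : PsiRel (underP σ τ) (treeUnder t w) := by
  apply HasDecreasingTree.psiRel
  rw [ofFn_underP]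
  refine (ht.hasDecreasingTree.map (Fin.strictMono_addNat q)).treeUnder_append
    (hw.hasDecreasingTree.map (Fin.strictMono_castLE _)) ?_
  simp only [List.forall_mem_map, List.forall_mem_ofFn_iff, Fin.lt_def, Fin.val_addNat,
    Fin.val_castLE]
  omega

/-- Theorem 2.9: for all `σ ∈ S_p`, `τ ∈ S_q`, the maps `ψ` preserve
the `over` and `under` operations: `ψ_{p+q}(σ/τ) = ψ_p(σ)/ψ_q(τ)` and
`ψ_{p+q}(σ\τ) = ψ_p(σ)\ψ_q(τ)`. -/
theorem stmt14 (p q : ℕ) (σ : Equiv.Perm (Fin p)) (τ : Equiv.Perm (Fin q))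
    (t w : PBTree) (ht : PsiRel σ t) (hw : PsiRel τ w) :
    PsiRel (overP σ τ) (treeOver t w) ∧ PsiRel (underP σ τ) (treeUnder t w) := by
  exact ⟨psiRel_overP ht hw, psiRel_underP ht hw⟩
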